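/- Let F be a finite graph with at least one edge and let T be a tree such that no connected component of F is contained in T, and such that every graph T+e obtained by adding an edge between two non-adjacent vertices of T, and every graph 2T+e obtained from the disjoint union of two copies of T by adding an edge with one endpoint in each copy, contains a connected component of F. Then for every integer k ≥ 0, the disjoint union of the complete graph on |V(F)| − 1 vertices with k copies of T is F-saturated. -/

import Mathlib

open SimpleGraph Filter Topology

/-- `H` (on `β`) is contained in `G` (on `α`): `G` has a subgraph isomorphic to `H`. -/
def Contains {α β : Type*} (G : SimpleGraph α) (H : SimpleGraph β) : Prop :=
  ∃ f : β ↪ α, ∀ a b : β, H.Adj a b → G.Adj (f a) (f b)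

/-- `G` is `F`-saturated: `G` does not contain `F`, but adding any missing edge creates `F`. -/
def SatSingle {γ α : Type*} (F : SimpleGraph γ) (G : SimpleGraph α) : Prop :=
  (¬ Contains G F) ∧
    ∀ u v : α, u ≠ v → ¬ G.Adj u v → Contains (G ⊔ SimpleGraph.fromEdgeSet {s(u, v)}) F

/-- The disjoint union of two graphs. -/
def disjUnionG {α β : Type*} (G : SimpleGraph α) (H : SimpleGraph β) : SimpleGraph (α ⊕ β) :=
  SimpleGraph.fromRel (fun x y =>
    match x, y with
    | Sum.inl a, Sum.inl b => G.Adj a b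
    | Sum.inr a, Sum.inr b => H.Adj a b
    | _, _ => False)

/-- `H ∪ kT`: the disjoint union of `H` with `k` copies of `T`. -/
def unionCopies {α β : Type*} (H : SimpleGraph α) (k : ℕ) (T : SimpleGraph β) :
    SimpleGraph (α ⊕ Fin k × β) :=
  SimpleGraph.fromRel (fun x y =>
    match x, y with
    | Sum.inl a, Sum.inl b => H.Adj a b
    | Sum.inr (i, a), Sum.inr (j, b) => i = j ∧ T.Adj a b
    | _, _ => False)

/-- `T` is a tree such that every graph `T+e` (obtained by adding an edge between two
non-adjacent vertices of `T`) and every graph `2T+e` (obtained from the disjoint union of two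
copies of `T` by adding an edge with one endpoint in each copy) contains a connected component of
`F` that is not contained in `T`. -/
def GoodTree {nF : ℕ} (F : SimpleGraph (Fin nF)) (t : ℕ) (T : SimpleGraph (Fin t)) : Prop :=
  T.IsTree ∧
  (∀ u v : Fin t, u ≠ v → ¬ T.Adj u v →
    ∃ c : F.ConnectedComponent, ¬ Contains T (SimpleGraph.induce c.supp F) ∧
      Contains (T ⊔ SimpleGraph.fromEdgeSet {s(u, v)}) (SimpleGraph.induce c.supp F)) ∧
  (∀ u v : Fin t,
    ∃ c : F.ConnectedComponent, ¬ Contains T (SimpleGraph.induce c.supp F) ∧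
      Contains (disjUnionG T T ⊔ SimpleGraph.fromEdgeSet {s(Sum.inl u, Sum.inr v)})
        (SimpleGraph.induce c.supp F))

section Auxiliary

variable {α β γ V W : Type*}

theorem Contains.map {G : SimpleGraph α} {G' : SimpleGraph γ} {H : SimpleGraph β}
    (h : Contains G H) {e : α → γ} (hinj : e.Injective)
    (he : ∀ a b, G.Adj a b → G'.Adj (e a) (e b)) : Contains G' H := by
  obtain ⟨f, hf⟩ := h
  exact ⟨f.trans ⟨e, hinj⟩, fun a b hab => he _ _ (hf a b hab)⟩

theorem disjUnionG_eq_sum (G : SimpleGraph α) (H : SimpleGraph β) :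
    disjUnionG G H = G ⊕g H := by
  ext x y
  rcases x with a | a <;> rcases y with b | b <;>
    simp only [disjUnionG, fromRel_adj, ne_eq, Sum.inl.injEq, Sum.inr.injEq, SimpleGraph.sum_adj,
      reduceCtorEq, not_false_eq_true, or_self, and_false]
  · exact ⟨fun h => h.2.elim id Adj.symm, fun h => ⟨h.ne, .inl h⟩⟩
  · exact ⟨fun h => h.2.elim id Adj.symm, fun h => ⟨h.ne, .inl h⟩⟩

@[simp]
theorem unionCopies_adj_inl_inl {H : SimpleGraph α} {k : ℕ} {T : SimpleGraph β} {a b : α} :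
    (unionCopies H k T).Adj (.inl a) (.inl b) ↔ H.Adj a b := by
  simp only [unionCopies, fromRel_adj, ne_eq, Sum.inl.injEq]
  exact ⟨fun h => h.2.elim id Adj.symm, fun h => ⟨h.ne, .inl h⟩⟩

@[simp]
theorem unionCopies_adj_inr_inr {H : SimpleGraph α} {k : ℕ} {T : SimpleGraph β}
    {p q : Fin k × β} :
    (unionCopies H k T).Adj (.inr p) (.inr q) ↔ p.1 = q.1 ∧ T.Adj p.2 q.2 := by
  obtain ⟨i, a⟩ := p
  obtain ⟨j, b⟩ := q
  simp only [unionCopies, fromRel_adj, ne_eq, Sum.inr.injEq, Prod.mk.injEq]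
  exact ⟨fun h => h.2.elim id fun h => ⟨h.1.symm, h.2.symm⟩,
    fun h => ⟨fun h' => h.2.ne h'.2, .inl h⟩⟩

@[simp]
theorem not_unionCopies_adj_inl_inr {H : SimpleGraph α} {k : ℕ} {T : SimpleGraph β} {a : α}
    {p : Fin k × β} : ¬ (unionCopies H k T).Adj (.inl a) (.inr p) := by
  simp [unionCopies]

@[simp]
theorem not_unionCopies_adj_inr_inl {H : SimpleGraph α} {k : ℕ} {T : SimpleGraph β} {a : α}
    {p : Fin k × β} : ¬ (unionCopies H k T).Adj (.inr p) (.inl a) := by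
  simp [unionCopies]

/-- A map sending adjacent vertices to mutually reachable ones preserves reachability. -/
theorem SimpleGraph.Reachable.map_of_adj_reachable {G : SimpleGraph V} {H : SimpleGraph W}
    (f : V → W) (hf : ∀ x y, G.Adj x y → H.Reachable (f x) (f y)) {x y : V}
    (h : G.Reachable x y) : H.Reachable (f x) (f y) := by
  obtain ⟨p⟩ := h
  induction p with
  | nil => rfl
  | cons hadj _ ih => exact (hf _ _ hadj).trans ih

theorem SimpleGraph.IsAcyclic.sum {G : SimpleGraph V} {H : SimpleGraph W} (hG : G.IsAcyclic)
    (hH : H.IsAcyclic) : (G ⊕g H).IsAcyclic := by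
  rw [isAcyclic_iff_forall_adj_isBridge] at hG hH ⊢
  rintro (a | a) (b | b) hab
  · rw [sum_adj_inl] at hab
    have hb := hG hab
    rw [isBridge_iff] at hb ⊢
    intro hr
    refine hb (hr.map_of_adj_reachable (Sum.elim id fun _ => a) ?_)
    rintro (x | x) (y | y) hxy
    · refine Adj.reachable ?_
      simpa [deleteEdges_adj] using hxy
    · simp [deleteEdges_adj] at hxy
    · simp [deleteEdges_adj] at hxy
    · rfl
  · simp at hab
  · simp at hab
  · rw [sum_adj_inr] at hab
    have hb := hH hab
    rw [isBridge_iff] at hb ⊢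
    intro hr
    refine hb (hr.map_of_adj_reachable (Sum.elim (fun _ => a) id) ?_)
    rintro (x | x) (y | y) hxy
    · rfl
    · simp [deleteEdges_adj] at hxy
    · simp [deleteEdges_adj] at hxy
    · refine Adj.reachable ?_
      simpa [deleteEdges_adj] using hxy

/-- A nontrivial component contained in an acyclic graph has a vertex with a unique neighbour. -/
theorem exists_adj_unique_of_contains_component [Finite V] {F : SimpleGraph V}
    {G : SimpleGraph α} (hG : G.IsAcyclic) (c : F.ConnectedComponent) [Nontrivial c.supp]
    (h : Contains G (induce c.supp F)) : ∃ x y, F.Adj x y ∧ ∀ z, F.Adj x z → z = y := by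
  classical
  obtain ⟨f, hf⟩ := h
  have hac : (induce c.supp F).IsAcyclic :=
    hG.comap ⟨f, fun {a b} hab => hf a b hab⟩ f.injective
  have htree : (induce c.supp F).IsTree := ⟨c.connected_toSimpleGraph, hac⟩
  have := Fintype.ofFinite c.supp
  obtain ⟨x, hx⟩ := htree.exists_vert_degree_one_of_nontrivial
  obtain ⟨y, hxy, huniq⟩ := degree_eq_one_iff_existsUnique_adj.mp hx
  refine ⟨x, y, hxy, fun z hz => ?_⟩
  have hzc : z ∈ c.supp := (c.mem_supp_congr_adj hz).mp x.2
  exact congrArg Subtype.val (huniq ⟨z, hzc⟩ hz)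

/-- A graph on `n` vertices with a leaf is contained in any graph consisting of a clique on
`n - 1` vertices together with an edge leaving the clique. -/
theorem contains_of_leaf {n : ℕ} {F : SimpleGraph (Fin n)} {x y : Fin n} (hxy : F.Adj x y)
    (huniq : ∀ z, F.Adj x z → z = y) {G : SimpleGraph (Fin (n - 1) ⊕ β)}
    (hclique : ∀ a b : Fin (n - 1), a ≠ b → G.Adj (.inl a) (.inl b)) {u : Fin (n - 1)} {v : β}
    (huv : G.Adj (.inl u) (.inr v)) : Contains G F := by
  classical
  have hcard : Fintype.card {z // z ≠ x} = Fintype.card (Fin (n - 1)) := by simp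
  let e₀ : {z // z ≠ x} ≃ Fin (n - 1) := Fintype.equivOfCardEq hcard
  let e := e₀.trans (Equiv.swap (e₀ ⟨y, hxy.ne'⟩) u)
  have hey : e ⟨y, hxy.ne'⟩ = u := by simp [e]
  let f : Fin n → Fin (n - 1) ⊕ β := fun z => if h : z = x then .inr v else .inl (e ⟨z, h⟩)
  have hfx : f x = .inr v := by simp [f]
  have hfne : ∀ z (h : z ≠ x), f z = .inl (e ⟨z, h⟩) := fun z h => by simp [f, h]
  have hfinj : Function.Injective f := by
    intro a b hab
    by_cases ha : a = x <;> by_cases hb : b = x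
    · rw [ha, hb]
    · rw [ha, hfx, hfne b hb] at hab
      cases hab
    · rw [hb, hfx, hfne a ha] at hab
      cases hab
    · rw [hfne a ha, hfne b hb] at hab
      simpa using hab
  have hleaf : ∀ z, F.Adj x z → G.Adj (f z) (f x) := by
    intro z hz
    obtain rfl := huniq z hz
    rw [hfx, hfne z hxy.ne', hey]
    exact huv
  refine ⟨⟨f, hfinj⟩, fun a b hab => ?_⟩
  change G.Adj (f a) (f b)
  by_cases ha : a = x
  · subst ha
    exact (hleaf b hab).symm
  by_cases hb : b = x
  · subst hb
    exact hleaf a hab.symm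
  rw [hfne a ha, hfne b hb]
  exact hclique _ _ fun h => hab.ne (by simpa using h)

/-- A component placed outside a clique on `n - 1` vertices extends to the whole graph on `n`
vertices. -/
theorem contains_of_contains_component {n : ℕ} {F : SimpleGraph (Fin n)}
    (c : F.ConnectedComponent) {G : SimpleGraph (Fin (n - 1) ⊕ β)}
    (hclique : ∀ a b : Fin (n - 1), a ≠ b → G.Adj (.inl a) (.inl b))
    (hc : Contains (G.comap Sum.inr) (induce c.supp F)) : Contains G F := by
  classical
  obtain ⟨g, hg⟩ := hc
  obtain ⟨x, hx⟩ := c.nonempty_supp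
  have hcard : Fintype.card {z // z ∉ c.supp} ≤ Fintype.card (Fin (n - 1)) := by
    have hlt := Fintype.card_subtype_lt (p := fun z => z ∉ c.supp) (x := x) (not_not.mpr hx)
    simp only [Fintype.card_fin] at hlt ⊢
    omega
  obtain ⟨e⟩ := Function.Embedding.nonempty_of_card_le hcard
  let f : Fin n → Fin (n - 1) ⊕ β :=
    fun z => if h : z ∈ c.supp then .inr (g ⟨z, h⟩) else .inl (e ⟨z, h⟩)
  have hfmem : ∀ z (h : z ∈ c.supp), f z = .inr (g ⟨z, h⟩) := fun z h => dif_pos h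
  have hfnot : ∀ z (h : z ∉ c.supp), f z = .inl (e ⟨z, h⟩) := fun z h => dif_neg h
  refine ⟨⟨f, fun a b hab => ?_⟩, fun a b hab => ?_⟩
  · by_cases ha : a ∈ c.supp <;> by_cases hb : b ∈ c.supp
    · rw [hfmem a ha, hfmem b hb] at hab
      simpa using hab
    · rw [hfmem a ha, hfnot b hb] at hab
      cases hab
    · rw [hfnot a ha, hfmem b hb] at hab
      cases hab
    · rw [hfnot a ha, hfnot b hb] at hab
      simpa using hab
  · change G.Adj (f a) (f b)
    by_cases ha : a ∈ c.supp
    · have hb : b ∈ c.supp := (c.mem_supp_congr_adj hab).mp ha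
      rw [hfmem a ha, hfmem b hb]
      exact hg ⟨a, ha⟩ ⟨b, hb⟩ hab
    · have hb : b ∉ c.supp := fun hb => ha ((c.mem_supp_congr_adj hab).mpr hb)
      rw [hfnot a ha, hfnot b hb]
      exact hclique _ _ fun h => hab.ne (by simpa using h)

/-- If no component of `F` is contained in `T`, every copy of `F` in `H ∪ kT` lies in `H`. -/
theorem contains_of_contains_unionCopies {F : SimpleGraph V} {H : SimpleGraph α} {k : ℕ}
    {T : SimpleGraph β} (hnc : ∀ c : F.ConnectedComponent, ¬ Contains T (induce c.supp F))
    (h : Contains (unionCopies H k T) F) : Contains H F := by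
  obtain ⟨f, hf⟩ := h
  have hinl : ∀ x, ∃ a, f x = .inl a := by
    intro x
    rcases hx : f x with a | ⟨i, a⟩
    · exact ⟨a, rfl⟩
    refine (hnc (F.connectedComponentMk x) ?_).elim
    have hcopy : ∀ y, F.Reachable x y → ∃ b, f y = .inr (i, b) := by
      rintro y ⟨p⟩
      induction p generalizing a with
      | nil => exact ⟨a, hx⟩
      | @cons u v _ hadj _ ih =>
        have hG := hf _ _ hadj
        rw [hx] at hG
        rcases hv : f v with b | ⟨j, b⟩
        · simp [hv] at hG
        · rw [hv, unionCopies_adj_inr_inr] at hG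
          obtain rfl : i = j := hG.1
          exact ih b hv
    have hmem : ∀ y : (F.connectedComponentMk x).supp, ∃ b, f y = .inr (i, b) := fun y =>
      hcopy y (ConnectedComponent.exact y.2).symm
    choose g hg using hmem
    refine ⟨⟨g, fun y z hyz => ?_⟩, fun y z hyz => ?_⟩
    · exact Subtype.ext (f.injective (by rw [hg, hg, hyz]))
    · have hG := hf y z hyz
      rw [hg, hg, unionCopies_adj_inr_inr] at hG
      exact hG.2
  choose g hg using hinl
  refine ⟨⟨g, fun y z hyz => f.injective (by rw [hg, hg, hyz])⟩, fun y z hyz => ?_⟩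
  have hG := hf _ _ hyz
  rwa [hg, hg, unionCopies_adj_inl_inl] at hG

end Auxiliary

/-- Claim 1: if no connected component of `F` is contained in the tree `T`, while every `T+e`
and every `2T+e` contains a connected component of `F`, then for every `k ≥ 0` the disjoint
union of the complete graph on `|V(F)| - 1` vertices with `k` copies of `T` is `F`-saturated. -/
theorem stmt19 {nF t : ℕ} (F : SimpleGraph (Fin nF)) (hF : 1 ≤ Nat.card F.edgeSet)
    (T : SimpleGraph (Fin t)) (hT : T.IsTree)
    (hnc : ∀ c : F.ConnectedComponent, ¬ Contains T (SimpleGraph.induce c.supp F))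
    (h1 : ∀ u v : Fin t, u ≠ v → ¬ T.Adj u v →
      ∃ c : F.ConnectedComponent,
        Contains (T ⊔ SimpleGraph.fromEdgeSet {s(u, v)}) (SimpleGraph.induce c.supp F))
    (h2 : ∀ u v : Fin t,
      ∃ c : F.ConnectedComponent,
        Contains (disjUnionG T T ⊔
            SimpleGraph.fromEdgeSet {s((Sum.inl u : Fin t ⊕ Fin t), (Sum.inr v : Fin t ⊕ Fin t))})
          (SimpleGraph.induce c.supp F)) :
    ∀ k : ℕ, SatSingle F (unionCopies (⊤ : SimpleGraph (Fin (nF - 1))) k T) := by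
  intro k
  obtain ⟨r⟩ := hT.connected.nonempty
  have hpos : 0 < nF := by
    rcases Nat.eq_zero_or_pos nF with rfl | h
    · obtain ⟨⟨e, _⟩⟩ := (Nat.card_pos_iff.mp hF).1
      exact e.ind fun a _ => a.elim0
    · exact h
  obtain ⟨x, y, hxy, huniq⟩ : ∃ x y, F.Adj x y ∧ ∀ z, F.Adj x z → z = y := by
    obtain ⟨c, hc⟩ := h2 r r
    have : Nontrivial c.supp := by
      by_contra hsub
      rw [not_nontrivial_iff_subsingleton] at hsub
      exact hnc c ⟨⟨fun _ => r, fun a b _ => Subsingleton.elim a b⟩,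
        fun a b hab => (hab.ne (Subsingleton.elim a b)).elim⟩
    rw [disjUnionG_eq_sum] at hc
    exact exists_adj_unique_of_contains_component
      ((hT.isAcyclic.sum hT.isAcyclic).sup_edge_of_not_reachable
        (not_reachable_sum_inl_inr r r)) c hc
  refine ⟨fun h => ?_, fun u v huv hnadj => ?_⟩
  · obtain ⟨f, -⟩ := contains_of_contains_unionCopies hnc h
    have := Fintype.card_le_of_embedding f
    simp only [Fintype.card_fin] at this
    omega
  set G' := unionCopies (⊤ : SimpleGraph (Fin (nF - 1))) k T ⊔ fromEdgeSet {s(u, v)}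
  have hclique : ∀ a b : Fin (nF - 1), a ≠ b → G'.Adj (.inl a) (.inl b) := fun a b hab =>
    .inl (unionCopies_adj_inl_inl.mpr hab)
  have huvadj : G'.Adj u v := .inr (by simp [huv])
  rcases u with u | ⟨i, u⟩ <;> rcases v with v | ⟨j, v⟩
  · exact (hnadj (unionCopies_adj_inl_inl.mpr fun h => huv (by rw [h]))).elim
  · exact contains_of_leaf hxy huniq hclique huvadj
  · exact contains_of_leaf hxy huniq hclique huvadj.symm
  by_cases hij : i = j
  · subst hij
    obtain ⟨c, hc⟩ := h1 u v (fun h => huv (by rw [h])) fun h =>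
      hnadj (unionCopies_adj_inr_inr.mpr ⟨rfl, h⟩)
    refine contains_of_contains_component c hclique
      (hc.map (Prod.mk_right_injective i) ?_)
    rintro a b (hab | hab)
    · exact .inl (unionCopies_adj_inr_inr.mpr ⟨rfl, hab⟩)
    · refine .inr ?_
      simpa using hab
  · obtain ⟨c, hc⟩ := h2 u v
    rw [disjUnionG_eq_sum] at hc
    refine contains_of_contains_component c hclique
      (hc.map (e := Sum.elim (fun a => (i, a)) fun a => (j, a)) ?_ ?_)
    · rintro (a | a) (b | b) hab <;> simp_all [eq_comm]
    · rintro (a | a) (b | b) (hab | hab)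
      · exact .inl (unionCopies_adj_inr_inr.mpr ⟨rfl, by simpa using hab⟩)
      · simp at hab
      · simp at hab
      · refine .inr ?_
        simpa [hij, Ne.symm hij] using hab
      · simp at hab
      · refine .inr ?_
        simpa [hij, Ne.symm hij] using hab
      · exact .inl (unionCopies_adj_inr_inr.mpr ⟨rfl, by simpa using hab⟩)
      · simp at hab
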